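/- Assume condition (R). Then the radius of starlikeness r*(h_{γ,σ}(·;q)) = r*_0(h_{γ,σ}(·;q)) satisfies Γ_q(γ+3)/(2σ²Γ_q(γ+1)) < r*(h_{γ,σ}(·;q)) < Γ_q(γ+3)Γ_q(γ+5) / ( σ²(2Γ_q(γ+1)Γ_q(γ+5) − 3q²Γ_q(γ+3)²) ). -/

import Mathlib

noncomputable def qPochInf (a q : ℝ) : ℝ := ∏' k : ℕ, (1 - a * q ^ k)

noncomputable def qGamma (q x : ℝ) : ℝ :=
  qPochInf q q * (1 - q) ^ (1 - x) / qPochInf (q ^ x) q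

noncomputable def qML (γ σ q : ℝ) (z : ℂ) : ℂ :=
  ∑' n : ℕ,
    (((-1) ^ n * σ ^ (2 * n) * q ^ (n * (n - 1)) / qGamma q (2 * n + γ + 1) : ℝ) : ℂ) * z ^ (2 * n)

noncomputable def qMLR (γ σ q : ℝ) (x : ℝ) : ℝ :=
  ∑' n : ℕ,
    ((-1) ^ n * σ ^ (2 * n) * q ^ (n * (n - 1)) / qGamma q (2 * n + γ + 1)) * x ^ (2 * n)

def condR (q γ : ℝ) : Prop :=
  (γ = 0 ∨ γ = 1) ∨
    (γ ∈ Set.Ioo (0 : ℝ) 2 ∧ γ ≠ 1 ∧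
      1 < q⁻¹ * (1 - q) * (1 - q ^ (γ + 1)) * (1 - q ^ (γ + 2)))

noncomputable def radiusStarlike (α : ℝ) (f : ℂ → ℂ) : ℝ :=
  sSup {r : ℝ | 0 < r ∧ ∀ z : ℂ, 0 < ‖z‖ → ‖z‖ < r →
    α < (z * deriv f z / f z).re}

noncomputable def radiusConvex (α : ℝ) (f : ℂ → ℂ) : ℝ :=
  sSup {r : ℝ | 0 < r ∧ ∀ z : ℂ, ‖z‖ < r →
    α < (1 + z * deriv (deriv f) z / deriv f z).re}

noncomputable def fML (γ σ q : ℝ) (z : ℂ) : ℂ :=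
  Complex.exp ((1 / ((γ : ℂ) + 1)) *
    Complex.log (z ^ ((γ : ℂ) + 1) * (qGamma q (γ + 1) : ℂ) * qML γ σ q z))

noncomputable def gML (γ σ q : ℝ) (z : ℂ) : ℂ :=
  z * (qGamma q (γ + 1) : ℂ) * qML γ σ q z

noncomputable def hML (γ σ q : ℝ) (z : ℂ) : ℂ :=
  z * (qGamma q (γ + 1) : ℂ) *
    ∑' n : ℕ,
      (((-1) ^ n * σ ^ (2 * n) * q ^ (n * (n - 1)) / qGamma q (2 * n + γ + 1) : ℝ) : ℂ) * z ^ n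

noncomputable def hMLR (γ σ q : ℝ) (x : ℝ) : ℝ :=
  x * qGamma q (γ + 1) *
    ∑' n : ℕ,
      ((-1) ^ n * σ ^ (2 * n) * q ^ (n * (n - 1)) / qGamma q (2 * n + γ + 1)) * x ^ n

/-!
With `A = σ² Γ_q(γ+1) / Γ_q(γ+3)` and `F(w) = ∑ (-1)ⁿ cₙ wⁿ`, `c₀ = c₁ = 1`, one has
`h(z) = f(A z) / A` for `f(w) = w F(w)`, so the radius of `f` is to be located in
`(1 / 2, 1 / (2 - 3 c₂))`. The functional equation of `Γ_q` and the log-concavity of `q`-numbers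
make `c` log-concave, with `c₂³ ≤ c₃` and `c₂ < 2 / 5`.

Lower bound: `w f'(w) / f(w) = 1 + w F'(w) / F(w)`, and `|w F'(w)| < |F(w)|` on the closed disc
`|w| ≤ 1 / 2`: it holds with room to spare for `1 - w + c₂ w²`, and log-concavity makes the tails
geometric. By compactness the inequality persists on a slightly larger disc.

Upper bound: at `R = 1 / (2 - 3 c₂)` the alternating series of `f'(R)` is at most its partial sum of
degree `4`, which is negative. So `f'` vanishes at some `x` in `(0, R)`, where `w f' / f` is `0`.
-/

section RadiusStarlike

open scoped Pointwise

/-- The radii of the discs about `0` on which `f` is starlike of order `α`; their supremum is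
`radiusStarlike α f`. -/
def starlikeRadii (α : ℝ) (f : ℂ → ℂ) : Set ℝ :=
  {r | 0 < r ∧ ∀ z : ℂ, 0 < ‖z‖ → ‖z‖ < r → α < (z * deriv f z / f z).re}

variable {α : ℝ} {f : ℂ → ℂ}

theorem norm_mem_upperBounds_starlikeRadii {z : ℂ} (hz : z ≠ 0)
    (h : (z * deriv f z / f z).re ≤ α) : ‖z‖ ∈ upperBounds (starlikeRadii α f) :=
  fun _ hr => not_lt.1 fun hzr => h.not_gt (hr.2 z (norm_pos_iff.2 hz) hzr)

theorem radiusStarlike_le_norm {z : ℂ} (hz : z ≠ 0) (h : (z * deriv f z / f z).re ≤ α) :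
    radiusStarlike α f ≤ ‖z‖ :=
  Real.sSup_le (norm_mem_upperBounds_starlikeRadii hz h) (norm_nonneg z)

theorem le_radiusStarlike {r : ℝ} (hr : r ∈ starlikeRadii α f) {z : ℂ} (hz : z ≠ 0)
    (h : (z * deriv f z / f z).re ≤ α) : r ≤ radiusStarlike α f :=
  le_csSup ⟨‖z‖, norm_mem_upperBounds_starlikeRadii hz h⟩ hr

theorem starlikeRadii_comp_mul {a : ℝ} (ha : 0 < a) :
    starlikeRadii α (fun z => f (a * z) / a) = a⁻¹ • starlikeRadii α f := by
  have ha' : (a : ℂ) ≠ 0 := Complex.ofReal_ne_zero.2 ha.ne'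
  have hnorm (z : ℂ) : ‖(a : ℂ) * z‖ = a * ‖z‖ := by
    rw [norm_mul, Complex.norm_of_nonneg ha.le]
  have hquot (z : ℂ) : z * deriv (fun z => f (a * z) / a) z / (f (a * z) / a) =
      a * z * deriv f (a * z) / f (a * z) := by
    rw [deriv_div_const, deriv_comp_mul_left, smul_eq_mul]
    field_simp
  ext r
  rw [Set.mem_inv_smul_set_iff₀ ha.ne', smul_eq_mul]
  refine and_congr (mul_pos_iff_of_pos_left ha).symm
    ((Equiv.mulLeft₀ (a : ℂ) ha').forall_congr fun {z} => ?_)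
  simp only [Equiv.mulLeft₀_apply, hquot, hnorm, mul_pos_iff_of_pos_left ha,
    mul_lt_mul_iff_right₀ ha]

theorem radiusStarlike_comp_mul {a : ℝ} (ha : 0 < a) :
    radiusStarlike α (fun z => f (a * z) / a) = radiusStarlike α f / a := by
  change sSup (starlikeRadii α _) = sSup (starlikeRadii α f) / a
  rw [starlikeRadii_comp_mul ha, Real.sSup_smul_of_nonneg (inv_nonneg.2 ha.le), smul_eq_mul,
    inv_mul_eq_div]

end RadiusStarlike

section AltSum

/-- The alternating power series `∑ (-1)ⁿ cₙ wⁿ` with real coefficients. -/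
noncomputable def altSum (c : ℕ → ℝ) (w : ℂ) : ℂ := ∑' n : ℕ, (-1) ^ n * (c n : ℂ) * w ^ n

variable {c : ℕ → ℝ} {r : ℝ} {w : ℂ}

theorem norm_altSum_term (c : ℕ → ℝ) (w : ℂ) (n : ℕ) :
    ‖(-1) ^ n * (c n : ℂ) * w ^ n‖ = |c n| * ‖w‖ ^ n := by
  simp

theorem norm_altSum_term_le (hw : w ∈ Metric.closedBall 0 r) (n : ℕ) :
    ‖(-1) ^ n * (c n : ℂ) * w ^ n‖ ≤ |c n| * r ^ n := by
  rw [norm_altSum_term]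
  gcongr
  exact mem_closedBall_zero_iff.1 hw

theorem summable_altSum (hc : Summable fun n => |c n| * r ^ n) (hw : w ∈ Metric.closedBall 0 r) :
    Summable fun n => (-1) ^ n * (c n : ℂ) * w ^ n :=
  .of_norm_bounded hc (norm_altSum_term_le hw)

theorem continuousOn_altSum (hc : Summable fun n => |c n| * r ^ n) :
    ContinuousOn (altSum c) (Metric.closedBall 0 r) :=
  continuousOn_tsum (fun _ => by fun_prop) hc fun n _ hw => norm_altSum_term_le hw n

theorem hasDerivAt_mul_altSum (hc : Summable fun n : ℕ => |(n + 1) * c n| * r ^ n)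
    (hw : w ∈ Metric.ball 0 r) :
    HasDerivAt (fun z => z * altSum c z) (altSum (fun n => (n + 1) * c n) w) w := by
  have hseries :
      (fun z => z * altSum c z) = fun z => ∑' n : ℕ, (-1) ^ n * (c n : ℂ) * z ^ (n + 1) := by
    funext z
    rw [altSum, ← tsum_mul_left]
    exact tsum_congr fun n => by ring
  have hderiv (n : ℕ) (z : ℂ) : HasDerivAt (fun z : ℂ => (-1) ^ n * (c n : ℂ) * z ^ (n + 1))
      ((-1) ^ n * (((n + 1) * c n : ℝ) : ℂ) * z ^ n) z := by
    refine ((hasDerivAt_pow (n + 1) z).const_mul ((-1) ^ n * (c n : ℂ))).congr_deriv ?_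
    push_cast [Nat.add_sub_cancel]
    ring
  rw [hseries]
  exact hasDerivAt_tsum_of_isPreconnected hc Metric.isOpen_ball (convex_ball 0 r).isPreconnected
    (fun n z _ => hderiv n z)
    (fun n z hz => norm_altSum_term_le (c := fun n => (n + 1) * c n)
      (Metric.ball_subset_closedBall hz) n)
    (Metric.mem_ball_self (Metric.pos_of_mem_ball hw)) (by simp [summable_zero]) hw

theorem altSum_add {b : ℕ → ℝ} (hb : Summable fun n => |b n| * r ^ n)
    (hc : Summable fun n => |c n| * r ^ n) (hw : w ∈ Metric.closedBall 0 r) :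
    altSum (fun n => b n + c n) w = altSum b w + altSum c w := by
  rw [altSum, altSum, altSum, ← (summable_altSum hb hw).tsum_add (summable_altSum hc hw)]
  exact tsum_congr fun n => by push_cast; ring

theorem altSum_ofReal (c : ℕ → ℝ) (x : ℝ) :
    altSum c x = ((∑' n : ℕ, (-1) ^ n * (c n * x ^ n) : ℝ) : ℂ) := by
  rw [altSum, Complex.ofReal_tsum]
  exact tsum_congr fun n => by push_cast; ring

theorem norm_altSum_sub_sum_le {M κ : ℝ} {m : ℕ} (hκ : 0 ≤ κ)
    (hc : ∀ n, |c (n + m)| ≤ M * κ ^ n) (hw : κ * ‖w‖ < 1) :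
    ‖altSum c w - ∑ i ∈ Finset.range m, (-1) ^ i * (c i : ℂ) * w ^ i‖ ≤
      M * ‖w‖ ^ m / (1 - κ * ‖w‖) := by
  have hgeom := (hasSum_geometric_of_lt_one (by positivity) hw).mul_left (M * ‖w‖ ^ m)
  have hterm (n : ℕ) : ‖(-1) ^ (n + m) * (c (n + m) : ℂ) * w ^ (n + m)‖ ≤
      M * ‖w‖ ^ m * (κ * ‖w‖) ^ n := by
    rw [norm_altSum_term]
    calc |c (n + m)| * ‖w‖ ^ (n + m) ≤ M * κ ^ n * ‖w‖ ^ (n + m) := by gcongr; exact hc n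
      _ = M * ‖w‖ ^ m * (κ * ‖w‖) ^ n := by ring
  have hsum : Summable fun n => (-1) ^ n * (c n : ℂ) * w ^ n :=
    (summable_nat_add_iff m).1 (.of_norm_bounded hgeom.summable hterm)
  rw [altSum, ← hsum.sum_add_tsum_nat_add m, add_sub_cancel_left, div_eq_mul_inv]
  exact tsum_of_norm_bounded hgeom hterm

theorem re_altSum_le_sum {x : ℝ} (hc : Summable fun n => |c n| * |x| ^ n)
    (hanti : Antitone fun n => c (n + 1) * x ^ (n + 1)) (k : ℕ) :
    (altSum c x).re ≤ ∑ i ∈ Finset.range (2 * k + 1), (-1) ^ i * (c i * x ^ i) := by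
  have hsum : Summable fun n => (-1) ^ n * (c n * x ^ n) :=
    .of_norm_bounded hc fun n => by simp
  have hsum' : Summable fun n => (-1) ^ n * (c (n + 1) * x ^ (n + 1)) :=
    ((summable_nat_add_iff 1).2 hsum).neg.congr fun n => by ring
  have hpartial := hanti.alternating_series_le_tendsto hsum'.hasSum.tendsto_sum_nat k
  have hshift (n : ℕ) : (-1) ^ (n + 1) * (c (n + 1) * x ^ (n + 1)) =
      -((-1) ^ n * (c (n + 1) * x ^ (n + 1))) := by ring
  rw [altSum_ofReal, Complex.ofReal_re, hsum.tsum_eq_zero_add, Finset.sum_range_succ']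
  simp only [hshift, tsum_neg, Finset.sum_neg_distrib]
  linarith

end AltSum

theorem re_div_pos_of_norm_sub_lt {a b : ℂ} (h : ‖a - b‖ < ‖b‖) : 0 < (a / b).re := by
  have hb : 0 < ‖b‖ := (norm_nonneg _).trans_lt h
  have hlt : ‖a / b - 1‖ < 1 := by
    rwa [div_sub_one (norm_pos_iff.1 hb), norm_div, div_lt_one hb]
  have := (abs_lt.1 ((Complex.abs_re_le_norm _).trans_lt hlt)).1
  rw [Complex.sub_re, Complex.one_re] at this
  linarith

-- `w - 2 d w²` is `-w P'(w)` for the quadratic `P(w) = 1 - w + d w²`.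
theorem le_sq_norm_quadratic_sub_sq_norm_mul_deriv {d : ℝ} (hd : 0 ≤ d) (hd' : d ≤ 2 / 5) {w : ℂ}
    (hw : ‖w‖ ≤ 1 / 2) :
    1 - 2 * ‖w‖ + 17 / 10 * (d * ‖w‖ ^ 2) ≤
      ‖1 - w + d * w ^ 2‖ ^ 2 - ‖w - 2 * d * w ^ 2‖ ^ 2 := by
  have hre : w.re ≤ ‖w‖ := Complex.re_le_norm w
  have hsq : ‖w‖ ^ 2 = w.re ^ 2 + w.im ^ 2 := by rw [Complex.sq_norm, Complex.normSq_apply]; ring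
  have hexp : ‖1 - w + d * w ^ 2‖ ^ 2 - ‖w - 2 * d * w ^ 2‖ ^ 2 =
      1 - 2 * w.re + 2 * d * (2 * w.re ^ 2 - ‖w‖ ^ 2) + 2 * (d * ‖w‖ ^ 2) * w.re
        - 3 * (d * ‖w‖ ^ 2) ^ 2 := by
    rw [hsq, Complex.sq_norm, Complex.sq_norm, Complex.normSq_apply, Complex.normSq_apply]
    simp only [pow_two, Complex.add_re, Complex.sub_re, Complex.one_re, Complex.mul_re,
      Complex.ofReal_re, Complex.ofReal_im, Complex.mul_im, Complex.add_im, Complex.sub_im,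
      Complex.one_im, Complex.re_ofNat, Complex.im_ofNat]
    ring
  have hs := norm_nonneg w
  generalize ‖w‖ = s at *
  generalize w.re = x at *
  have hds : d * s ^ 2 ≤ 1 / 10 := by
    calc d * s ^ 2 ≤ 2 / 5 * (1 / 2) ^ 2 := by gcongr
      _ = 1 / 10 := by norm_num
  -- For fixed `‖w‖` the difference is smallest at `w = ‖w‖`.
  have hmono : 0 ≤ (s - x) * (2 - 4 * d * (s + x) - 2 * (d * s ^ 2)) :=
    mul_nonneg (by linarith) (by nlinarith)
  rw [hexp]
  have hds0 : 0 ≤ d * s ^ 2 := by positivity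
  linear_combination hmono + 3 * mul_nonneg hds0 (sub_nonneg.2 hds) + 2 * mul_nonneg hds0 hs

-- `11 / 2 = 5 / 4 + 17 / 4` adds the constants of the two tail estimates for `∑ (-1)ⁿ cₙ wⁿ` and
-- `∑ (-1)ⁿ n cₙ wⁿ` below.
theorem norm_mul_deriv_quadratic_add_lt {d : ℝ} (hd : 0 < d) (hd' : d ≤ 2 / 5) {w : ℂ}
    (hw : ‖w‖ ≤ 1 / 2) :
    ‖w - 2 * d * w ^ 2‖ + 11 / 2 * (d ^ 2 * ‖w‖ ^ 3) < ‖1 - w + d * w ^ 2‖ := by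
  have hgap := le_sq_norm_quadratic_sub_sq_norm_mul_deriv hd.le hd' hw
  have hT : ‖w - 2 * d * w ^ 2‖ ≤ 7 / 10 := by
    calc ‖w - 2 * d * w ^ 2‖ ≤ ‖w‖ + 2 * d * ‖w‖ ^ 2 := by
          refine (norm_sub_le _ _).trans_eq ?_
          simp [abs_of_pos hd]
      _ ≤ 1 / 2 + 2 * (2 / 5) * (1 / 2) ^ 2 := by gcongr
      _ = 7 / 10 := by norm_num
  have hs := norm_nonneg w
  have hT0 := norm_nonneg (w - 2 * d * w ^ 2)
  refine lt_of_pow_lt_pow_left₀ 2 (norm_nonneg _) ?_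
  generalize ‖w - 2 * d * w ^ 2‖ = T at *
  generalize ‖1 - w + d * w ^ 2‖ = P at *
  generalize ‖w‖ = s at *
  have hδ : 11 / 2 * (d ^ 2 * s ^ 3) ≤ 11 / 10 * (d * s ^ 2) := by
    calc 11 / 2 * (d ^ 2 * s ^ 3) = 11 / 2 * (d * s) * (d * s ^ 2) := by ring
      _ ≤ 11 / 2 * (2 / 5 * (1 / 2)) * (d * s ^ 2) := by gcongr
      _ = 11 / 10 * (d * s ^ 2) := by ring
  have hδ' : 11 / 2 * (d ^ 2 * s ^ 3) ≤ 11 / 100 := by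
    calc 11 / 2 * (d ^ 2 * s ^ 3) ≤ 11 / 2 * ((2 / 5) ^ 2 * (1 / 2) ^ 3) := by gcongr
      _ = 11 / 100 := by norm_num
  have hδ0 : 0 ≤ 11 / 2 * (d ^ 2 * s ^ 3) := by positivity
  generalize 11 / 2 * (d ^ 2 * s ^ 3) = δ at *
  have hstrict : 0 < 1 - 2 * s + 3 / 100 * (d * s ^ 2) := by
    rcases hw.lt_or_eq with h | rfl
    · linarith [show 0 ≤ d * s ^ 2 by positivity]
    · linarith
  have hsmall : δ * (2 * T + δ) ≤ 11 / 10 * (d * s ^ 2) * (2 * (7 / 10) + 11 / 100) := by gcongr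
  calc (T + δ) ^ 2 = T ^ 2 + δ * (2 * T + δ) := by ring
    _ < P ^ 2 := by linarith

theorem quartic_truncation_neg {d c₃ c₄ x : ℝ} (hd : 0 < d) (hd' : d < 2 / 5)
    (hx : x * (2 - 3 * d) = 1) (h₃ : d ^ 3 ≤ c₃) (h₃' : c₃ ≤ d ^ 2) (h₄ : c₄ * d ≤ c₃ ^ 2) :
    1 - 2 * x + 3 * d * x ^ 2 - 4 * c₃ * x ^ 3 + 5 * c₄ * x ^ 4 < 0 := by
  have hx0 : 0 < x := pos_of_mul_pos_left (by rw [hx]; exact one_pos) (by linarith)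
  have hdx : d * x ≤ 1 / 2 := by nlinarith
  obtain ⟨y, rfl⟩ : ∃ y, c₃ = d * y := ⟨c₃ / d, by field_simp⟩
  have hdy : d ^ 2 ≤ y := le_of_mul_le_mul_left (by linarith) hd
  have hyd : y ≤ d := le_of_mul_le_mul_left (by linarith) hd
  have h₄' : c₄ ≤ d * y ^ 2 := le_of_mul_le_mul_right (by linarith) hd
  have hquad : 1 - 2 * x + 3 * d * x ^ 2 = d * x ^ 2 * (9 * d - 3) := by
    linear_combination (-(x * (2 - 3 * d)) - 1 + 2 * x) * hx
  have hlow : 9 * d - 3 < 3 * (d ^ 2 * x) := by nlinarith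
  have hconcave : 3 * (d ^ 2 * x) ≤ 4 * (y * x) - 5 * (y * x) ^ 2 := by
    have h1 : d ^ 2 * x ≤ y * x := by gcongr
    have h2 : y * x ≤ 1 / 2 := le_trans (by gcongr) hdx
    have h3 : d ^ 2 * x ≤ 1 / 5 := by nlinarith
    have h4 : 0 ≤ d ^ 2 * x := by positivity
    have h5 : 0 ≤ (y * x - d ^ 2 * x) * (4 - 5 * (y * x) - 5 * (d ^ 2 * x)) :=
      mul_nonneg (by linarith) (by linarith)
    linear_combination h5 + mul_nonneg h4 (by linarith : 0 ≤ 1 - 5 * (d ^ 2 * x))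
  calc 1 - 2 * x + 3 * d * x ^ 2 - 4 * (d * y) * x ^ 3 + 5 * c₄ * x ^ 4
      ≤ 1 - 2 * x + 3 * d * x ^ 2 - 4 * (d * y) * x ^ 3 + 5 * (d * y ^ 2) * x ^ 4 := by gcongr
    _ = d * x ^ 2 * (9 * d - 3 - 4 * (y * x) + 5 * (y * x) ^ 2) := by rw [hquad]; ring
    _ < 0 := mul_neg_of_pos_of_neg (by positivity) (by linarith)

/-- Positive log-concave sequences `1, 1, c₂, c₃, …`, the absolute values of the coefficients of
`f(w) / w`, where `f` is the function whose starlikeness is studied; the slope of `f` is scaled so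
that also `c₁ = 1`. -/
structure IsNormalizedLogConcave (c : ℕ → ℝ) : Prop where
  pos : ∀ n, 0 < c n
  zero : c 0 = 1
  one : c 1 = 1
  mul_le_sq : ∀ n, c (n + 2) * c n ≤ c (n + 1) ^ 2

namespace IsNormalizedLogConcave

variable {c : ℕ → ℝ}

theorem le_mul (hc : IsNormalizedLogConcave c) (n : ℕ) : c (n + 2) ≤ c 2 * c (n + 1) := by
  induction n with
  | zero => rw [zero_add, zero_add, hc.one, mul_one]
  | succ n ih =>
    refine le_of_mul_le_mul_right ?_ (hc.pos (n + 1))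
    calc c (n + 3) * c (n + 1) ≤ c (n + 2) * c (n + 2) := (hc.mul_le_sq (n + 1)).trans_eq (sq _)
      _ ≤ c (n + 2) * (c 2 * c (n + 1)) := by gcongr; exact (hc.pos _).le
      _ = c 2 * c (n + 2) * c (n + 1) := by ring

theorem le_pow (hc : IsNormalizedLogConcave c) (n : ℕ) : c (n + 1) ≤ c 2 ^ n := by
  induction n with
  | zero => rw [zero_add, hc.one, pow_zero]
  | succ n ih =>
    calc c (n + 2) ≤ c 2 * c (n + 1) := hc.le_mul n
      _ ≤ c 2 * c 2 ^ n := by gcongr; exact (hc.pos 2).le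
      _ = c 2 ^ (n + 1) := (pow_succ' _ _).symm

theorem succ_mul_le (hc : IsNormalizedLogConcave c) (h₂ : c 2 ≤ 2 / 5) (n : ℕ) :
    (n + 1) * c n ≤ 4 * (3 / 5) ^ n := by
  rcases n with _ | n
  · rw [hc.zero]; norm_num
  · have hbern : 1 + n * (1 / 2 : ℝ) ≤ (1 + 1 / 2) ^ n := one_add_mul_le_pow (by norm_num) n
    have hpos := (hc.pos 2).le
    calc ((n + 1 : ℕ) + 1) * c (n + 1) = 2 * (1 + n * (1 / 2)) * c (n + 1) := by push_cast; ring
      _ ≤ 2 * (1 + 1 / 2) ^ n * (2 / 5) ^ n := by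
          gcongr
          · exact (hc.pos _).le
          · exact (hc.le_pow n).trans (by gcongr)
      _ = 2 * (3 / 5) ^ n := by rw [mul_assoc, ← mul_pow]; norm_num
      _ ≤ 4 * (3 / 5) ^ (n + 1) := by
          rw [pow_succ]
          linarith [pow_pos (show (0 : ℝ) < 3 / 5 by norm_num) n]

theorem summable_succ_mul (hc : IsNormalizedLogConcave c) (h₂ : c 2 ≤ 2 / 5) :
    Summable fun n : ℕ => |(n + 1) * c n| * (3 / 2) ^ n := by
  refine .of_nonneg_of_le (fun n => by positivity) (fun n => ?_)
    ((summable_geometric_of_lt_one (r := 9 / 10) (by norm_num) (by norm_num)).mul_left 4)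
  rw [abs_of_pos (mul_pos n.cast_add_one_pos (hc.pos n))]
  calc (n + 1) * c n * (3 / 2) ^ n ≤ 4 * (3 / 5) ^ n * (3 / 2) ^ n := by
        gcongr ?_ * _; exact hc.succ_mul_le h₂ n
    _ = 4 * (9 / 10) ^ n := by rw [mul_assoc, ← mul_pow]; norm_num

theorem summable_natCast_mul (hc : IsNormalizedLogConcave c) (h₂ : c 2 ≤ 2 / 5) :
    Summable fun n : ℕ => |n * c n| * (3 / 2) ^ n := by
  refine .of_nonneg_of_le (fun n => by positivity) (fun n => ?_) (hc.summable_succ_mul h₂)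
  have := (hc.pos n).le
  gcongr
  linarith

theorem summable (hc : IsNormalizedLogConcave c) (h₂ : c 2 ≤ 2 / 5) :
    Summable fun n : ℕ => |c n| * (3 / 2) ^ n := by
  refine .of_nonneg_of_le (fun n => by positivity) (fun n => ?_) (hc.summable_succ_mul h₂)
  have := (hc.pos n).le
  gcongr
  exact le_mul_of_one_le_left this (by simp)

theorem norm_altSum_sub_le (hc : IsNormalizedLogConcave c) (h₂ : c 2 ≤ 2 / 5) {w : ℂ}
    (hw : ‖w‖ ≤ 1 / 2) :
    ‖altSum c w - (1 - w + c 2 * w ^ 2)‖ ≤ 5 / 4 * (c 2 ^ 2 * ‖w‖ ^ 3) := by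
  have hd := (hc.pos 2).le
  have hdw : c 2 * ‖w‖ ≤ 1 / 5 := by
    calc c 2 * ‖w‖ ≤ 2 / 5 * (1 / 2) := by gcongr
      _ = 1 / 5 := by norm_num
  have htail (n : ℕ) : |c (n + 3)| ≤ c 2 ^ 2 * c 2 ^ n := by
    rw [abs_of_pos (hc.pos _), ← pow_add, add_comm 2]
    exact hc.le_pow (n + 2)
  have hsum : ∑ i ∈ Finset.range 3, (-1) ^ i * (c i : ℂ) * w ^ i = 1 - w + c 2 * w ^ 2 := by
    simp only [Finset.sum_range_succ, Finset.sum_range_zero, hc.zero, hc.one]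
    push_cast
    ring
  rw [← hsum]
  calc _ ≤ c 2 ^ 2 * ‖w‖ ^ 3 / (1 - c 2 * ‖w‖) :=
        norm_altSum_sub_sum_le hd htail (by linarith)
    _ ≤ c 2 ^ 2 * ‖w‖ ^ 3 / (4 / 5) := by gcongr; linarith
    _ = 5 / 4 * (c 2 ^ 2 * ‖w‖ ^ 3) := by ring

theorem norm_altSum_natCast_mul_add_le (hc : IsNormalizedLogConcave c) (h₂ : c 2 ≤ 2 / 5) {w : ℂ}
    (hw : ‖w‖ ≤ 1 / 2) :
    ‖altSum (fun n => n * c n) w + (w - 2 * c 2 * w ^ 2)‖ ≤ 17 / 4 * (c 2 ^ 2 * ‖w‖ ^ 3) := by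
  have hd := (hc.pos 2).le
  have hdw : 4 / 3 * c 2 * ‖w‖ ≤ 4 / 15 := by
    calc 4 / 3 * c 2 * ‖w‖ ≤ 4 / 3 * (2 / 5) * (1 / 2) := by gcongr
      _ = 4 / 15 := by norm_num
  have htail (n : ℕ) : |((n + 3 : ℕ) : ℝ) * c (n + 3)| ≤ 3 * c 2 ^ 2 * (4 / 3 * c 2) ^ n := by
    have hbern : 1 + n * (1 / 3 : ℝ) ≤ (1 + 1 / 3) ^ n := one_add_mul_le_pow (by norm_num) n
    rw [abs_of_pos (mul_pos (by positivity) (hc.pos _))]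
    calc ((n + 3 : ℕ) : ℝ) * c (n + 3) = 3 * (1 + n * (1 / 3)) * c (n + 3) := by push_cast; ring
      _ ≤ 3 * (1 + 1 / 3) ^ n * c 2 ^ (n + 2) := by
          gcongr
          · exact (hc.pos _).le
          · exact hc.le_pow (n + 2)
      _ = 3 * c 2 ^ 2 * (4 / 3 * c 2) ^ n := by norm_num [mul_pow]; ring
  have hsum : ∑ i ∈ Finset.range 3, (-1) ^ i * ((i * c i : ℝ) : ℂ) * w ^ i =
      -(w - 2 * c 2 * w ^ 2) := by
    simp only [Finset.sum_range_succ, Finset.sum_range_zero, hc.one]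
    push_cast
    ring
  rw [← sub_neg_eq_add, ← hsum]
  calc _ ≤ 3 * c 2 ^ 2 * ‖w‖ ^ 3 / (1 - 4 / 3 * c 2 * ‖w‖) :=
        norm_altSum_sub_sum_le (c := fun n => n * c n) (by positivity) htail (by linarith)
    _ ≤ 3 * c 2 ^ 2 * ‖w‖ ^ 3 / (12 / 17) := by gcongr; linarith
    _ = 17 / 4 * (c 2 ^ 2 * ‖w‖ ^ 3) := by ring

theorem norm_altSum_natCast_mul_lt (hc : IsNormalizedLogConcave c) (h₂ : c 2 ≤ 2 / 5) {w : ℂ}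
    (hw : ‖w‖ ≤ 1 / 2) : ‖altSum (fun n => n * c n) w‖ < ‖altSum c w‖ := by
  have hF := norm_sub_norm_le (1 - w + c 2 * w ^ 2) (altSum c w)
  have hD := norm_le_add_norm_add (altSum (fun n => n * c n) w) (w - 2 * c 2 * w ^ 2)
  rw [norm_sub_rev] at hF
  linarith [hc.norm_altSum_sub_le h₂ hw, hc.norm_altSum_natCast_mul_add_le h₂ hw,
    norm_mul_deriv_quadratic_add_lt (hc.pos 2) h₂ hw]

theorem exists_norm_altSum_natCast_mul_lt (hc : IsNormalizedLogConcave c) (h₂ : c 2 ≤ 2 / 5) :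
    ∃ r > 1 / 2, ∀ w ∈ Metric.ball (0 : ℂ) r,
      w ∈ Metric.ball 0 (3 / 2) ∧ ‖altSum (fun n => n * c n) w‖ < ‖altSum c w‖ := by
  set U : Set ℂ :=
    Metric.ball 0 (3 / 2) ∩ {w | 0 < ‖altSum c w‖ - ‖altSum (fun n => n * c n) w‖}
  have hcont {b : ℕ → ℝ} (hb : Summable fun n => |b n| * (3 / 2) ^ n) :
      ContinuousOn (fun w => ‖altSum b w‖) (Metric.ball 0 (3 / 2)) :=
    ((continuousOn_altSum hb).mono Metric.ball_subset_closedBall).norm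
  have hopen : IsOpen U :=
    ((hcont (hc.summable h₂)).sub (hcont (hc.summable_natCast_mul h₂))).isOpen_inter_preimage
      Metric.isOpen_ball isOpen_Ioi
  have hsub : Metric.closedBall 0 (1 / 2) ⊆ U := fun w hw =>
    ⟨Metric.closedBall_subset_ball (by norm_num) hw,
      sub_pos.2 (hc.norm_altSum_natCast_mul_lt h₂ (mem_closedBall_zero_iff.1 hw))⟩
  obtain ⟨δ, hδ, hδU⟩ :=
    (isCompact_closedBall (0 : ℂ) (1 / 2)).exists_thickening_subset_open hopen hsub
  rw [thickening_closedBall hδ (by norm_num)] at hδU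
  exact ⟨δ + 1 / 2, lt_add_of_pos_left _ hδ, fun w hw => (hδU hw).imp_right sub_pos.1⟩

theorem deriv_mul_altSum (hc : IsNormalizedLogConcave c) (h₂ : c 2 ≤ 2 / 5) {w : ℂ}
    (hw : w ∈ Metric.ball 0 (3 / 2)) :
    deriv (fun z => z * altSum c z) w = altSum (fun n => (n + 1) * c n) w :=
  (hasDerivAt_mul_altSum (hc.summable_succ_mul h₂) hw).deriv

theorem altSum_succ_mul (hc : IsNormalizedLogConcave c) (h₂ : c 2 ≤ 2 / 5) {w : ℂ}
    (hw : w ∈ Metric.closedBall 0 (3 / 2)) :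
    altSum (fun n => (n + 1) * c n) w = altSum (fun n => n * c n) w + altSum c w := by
  simp only [add_one_mul]
  exact altSum_add (hc.summable_natCast_mul h₂) (hc.summable h₂) hw

theorem exists_mem_starlikeRadii (hc : IsNormalizedLogConcave c) (h₂ : c 2 ≤ 2 / 5) :
    ∃ r ∈ starlikeRadii 0 (fun z => z * altSum c z), 1 / 2 < r := by
  obtain ⟨r, hr, hball⟩ := hc.exists_norm_altSum_natCast_mul_lt h₂
  refine ⟨r, ⟨by linarith, fun w hw0 hwr => ?_⟩, hr⟩
  obtain ⟨hw, hlt⟩ := hball w (mem_ball_zero_iff.2 hwr)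
  rw [hc.deriv_mul_altSum h₂ hw, mul_div_mul_left _ _ (norm_pos_iff.1 hw0)]
  apply re_div_pos_of_norm_sub_lt
  rwa [hc.altSum_succ_mul h₂ (Metric.ball_subset_closedBall hw), add_sub_cancel_right]

theorem antitone_succ_mul_pow (hc : IsNormalizedLogConcave c) {x : ℝ} (hx : 0 ≤ x)
    (hdx : c 2 * x ≤ 1 / 2) :
    Antitone fun n : ℕ => ((n + 1 : ℕ) + 1) * c (n + 1) * x ^ (n + 1) := by
  refine antitone_nat_of_succ_le fun n => ?_
  have hpos := (hc.pos (n + 1)).le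
  calc ((n + 1 + 1 : ℕ) + 1) * c (n + 2) * x ^ (n + 2)
      ≤ ((n + 1 + 1 : ℕ) + 1) * (c 2 * c (n + 1)) * x ^ (n + 2) := by gcongr; exact hc.le_mul n
    _ = (n + 3) * (c 2 * x) * (c (n + 1) * x ^ (n + 1)) := by push_cast; ring
    _ ≤ (n + 3) * (1 / 2) * (c (n + 1) * x ^ (n + 1)) := by gcongr
    _ ≤ (n + 2) * (c (n + 1) * x ^ (n + 1)) := by gcongr; linarith
    _ = ((n + 1 : ℕ) + 1) * c (n + 1) * x ^ (n + 1) := by push_cast; ring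

theorem re_altSum_succ_mul_neg (hc : IsNormalizedLogConcave c) (h₂ : c 2 < 2 / 5)
    (h₃ : c 2 ^ 3 ≤ c 3) {x : ℝ} (hx0 : 0 ≤ x) (hx : x * (2 - 3 * c 2) = 1) :
    (altSum (fun n => (n + 1) * c n) x).re < 0 := by
  have hd := hc.pos 2
  have hx2 : x ≤ 3 / 2 := by nlinarith
  have hdx : c 2 * x ≤ 1 / 2 := by nlinarith
  have hsum : Summable fun n : ℕ => |(n + 1) * c n| * |x| ^ n :=
    .of_nonneg_of_le (fun n => by positivity)
      (fun n => by gcongr; rwa [abs_of_nonneg hx0]) (hc.summable_succ_mul h₂.le)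
  have h₃' : c 3 ≤ c 2 ^ 2 := hc.le_pow 2
  have hneg := quartic_truncation_neg hd h₂ hx h₃ h₃' (hc.mul_le_sq 2)
  refine (re_altSum_le_sum (c := fun n => (n + 1) * c n) hsum
    (hc.antitone_succ_mul_pow hx0 hdx) 2).trans_lt ?_
  refine lt_of_eq_of_lt ?_ hneg
  simp only [Finset.sum_range_succ, Finset.sum_range_zero, hc.zero, hc.one]
  push_cast
  ring

theorem exists_altSum_succ_mul_eq_zero (hc : IsNormalizedLogConcave c) (h₂ : c 2 < 2 / 5)
    (h₃ : c 2 ^ 3 ≤ c 3) :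
    ∃ x ∈ Set.Ioo 0 (1 / (2 - 3 * c 2)), altSum (fun n => (n + 1) * c n) (x : ℂ) = 0 := by
  have hden : 0 < 2 - 3 * c 2 := by linarith
  set R := 1 / (2 - 3 * c 2) with hR
  have hR0 : 0 < R := by positivity
  have hR2 : R ≤ 3 / 2 := by rw [hR, div_le_iff₀ hden]; linarith
  have hcont : ContinuousOn (fun x : ℝ => (altSum (fun n => (n + 1) * c n) x).re) (Set.Icc 0 R) :=
    Complex.continuous_re.comp_continuousOn <|
      (continuousOn_altSum (hc.summable_succ_mul h₂.le)).comp Complex.continuous_ofReal.continuousOn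
        fun x hx => by
          rw [mem_closedBall_zero_iff, Complex.norm_of_nonneg hx.1]
          exact hx.2.trans hR2
  have hzero : 0 < (altSum (fun n => (n + 1) * c n) (0 : ℝ)).re := by
    rw [altSum_ofReal, tsum_eq_single 0 fun n hn => by simp [hn]]
    simp [hc.zero]
  have hneg := hc.re_altSum_succ_mul_neg h₂ h₃ hR0.le (one_div_mul_cancel hden.ne')
  obtain ⟨x, hx, hx0⟩ := intermediate_value_Ioo' hR0.le hcont ⟨hneg, hzero⟩
  refine ⟨x, hx, ?_⟩
  replace hx0 : (altSum (fun n => (n + 1) * c n) x).re = 0 := hx0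
  rw [altSum_ofReal, Complex.ofReal_re] at hx0
  rw [altSum_ofReal, hx0, Complex.ofReal_zero]

theorem radiusStarlike_mem_Ioo (hc : IsNormalizedLogConcave c) (h₂ : c 2 < 2 / 5)
    (h₃ : c 2 ^ 3 ≤ c 3) :
    radiusStarlike 0 (fun z => z * altSum c z) ∈ Set.Ioo (1 / 2) (1 / (2 - 3 * c 2)) := by
  obtain ⟨r, hr, hr2⟩ := hc.exists_mem_starlikeRadii h₂.le
  obtain ⟨x, hx, hx0⟩ := hc.exists_altSum_succ_mul_eq_zero h₂ h₃
  have hnorm : ‖(x : ℂ)‖ = x := Complex.norm_of_nonneg hx.1.le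
  have hxne : (x : ℂ) ≠ 0 := Complex.ofReal_ne_zero.2 hx.1.ne'
  have hR : 1 / (2 - 3 * c 2) < 3 / 2 := by rw [div_lt_iff₀ (by linarith)]; linarith
  have hxball : (x : ℂ) ∈ Metric.ball 0 (3 / 2) := by
    rw [mem_ball_zero_iff, hnorm]; exact hx.2.trans hR
  have hquot : (x * deriv (fun z => z * altSum c z) x / (x * altSum c x)).re ≤ 0 := by
    rw [hc.deriv_mul_altSum h₂.le hxball, hx0, mul_zero, zero_div, Complex.zero_re]
  exact ⟨hr2.trans_le (le_radiusStarlike hr hxne hquot),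
    ((radiusStarlike_le_norm hxne hquot).trans_eq hnorm).trans_lt hx.2⟩

end IsNormalizedLogConcave

section QGamma

/-- The `q`-number `[x]_q = (1 - q ^ x) / (1 - q)`, the factor in the functional equation of the
`q`-gamma function. -/
noncomputable def qNum (q x : ℝ) : ℝ := (1 - q ^ x) / (1 - q)

variable {q x y : ℝ}

theorem qNum_natCast (hq : q ≠ 1) (n : ℕ) : qNum q n = ∑ i ∈ Finset.range n, q ^ i := by
  rw [qNum, Real.rpow_natCast, geom_sum_eq hq, ← neg_div_neg_eq, neg_sub, neg_sub]

theorem qNum_pos (hq0 : 0 < q) (hq1 : q < 1) (hx : 0 < x) : 0 < qNum q x :=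
  div_pos (sub_pos.2 (Real.rpow_lt_one hq0.le hq1 hx)) (sub_pos.2 hq1)

theorem qNum_le_qNum (hq0 : 0 < q) (hq1 : q < 1) (hxy : x ≤ y) : qNum q x ≤ qNum q y :=
  div_le_div_of_nonneg_right
    (sub_le_sub_left (Real.rpow_le_rpow_of_exponent_ge hq0 hq1.le hxy) 1) (sub_pos.2 hq1).le

theorem qNum_mul_qNum_le_of_add_eq {a b c d : ℝ} (hq0 : 0 < q) (hq1 : q < 1) (hab : a ≤ b)
    (hac : a ≤ c) (hsum : a + d = b + c) : qNum q a * qNum q d ≤ qNum q b * qNum q c := by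
  have hprod : q ^ a * q ^ d = q ^ b * q ^ c := by rw [← Real.rpow_add hq0, hsum, Real.rpow_add hq0]
  have hfactor : 0 ≤ (q ^ a - q ^ b) * (q ^ a - q ^ c) :=
    mul_nonneg (sub_nonneg.2 (Real.rpow_le_rpow_of_exponent_ge hq0 hq1.le hab))
      (sub_nonneg.2 (Real.rpow_le_rpow_of_exponent_ge hq0 hq1.le hac))
  have hpow : q ^ b + q ^ c ≤ q ^ a + q ^ d := by
    refine le_of_mul_le_mul_left ?_ (Real.rpow_pos_of_pos hq0 a)
    linear_combination hfactor - hprod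
  simp only [qNum, div_mul_div_comm]
  refine div_le_div_of_nonneg_right ?_ (mul_pos (sub_pos.2 hq1) (sub_pos.2 hq1)).le
  linear_combination hpow + hprod

theorem qPochInf_pos {a : ℝ} (hq0 : 0 < q) (hq1 : q < 1) (ha : a < 1) : 0 < qPochInf a q := by
  have hterm (k : ℕ) : 0 < 1 + -(a * q ^ k) := by
    linarith [mul_pos (pow_pos hq0 k) (sub_pos.2 ha), pow_le_one₀ hq0.le hq1.le (n := k)]
  have hsum : Summable fun k : ℕ => -(a * q ^ k) :=
    ((summable_geometric_of_lt_one hq0.le hq1).mul_left a).neg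
  simp only [qPochInf, sub_eq_add_neg]
  rw [← Real.rexp_tsum_eq_tprod hterm (Real.summable_log_one_add_of_summable hsum)]
  exact Real.exp_pos _

theorem qPochInf_eq_mul (a : ℝ) (hq0 : 0 ≤ q) (hq1 : q < 1) :
    qPochInf a q = (1 - a) * qPochInf (a * q) q := by
  have hsum : Summable fun k : ℕ => -(a * q * q ^ k) :=
    ((summable_geometric_of_lt_one hq0 hq1).mul_left (a * q)).neg
  have hmul : Multipliable fun k : ℕ => 1 - a * q ^ (k + 1) :=
    (Real.multipliable_one_add_of_summable hsum).congr fun k => by ring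
  have hshift : qPochInf (a * q) q = ∏' k : ℕ, (1 - a * q ^ (k + 1)) :=
    tprod_congr fun k => by ring
  rw [hshift, qPochInf, tprod_eq_zero_mul' (f := fun k => 1 - a * q ^ k) hmul, pow_zero, mul_one]

theorem qGamma_pos (hq0 : 0 < q) (hq1 : q < 1) (hx : 0 < x) : 0 < qGamma q x :=
  div_pos (mul_pos (qPochInf_pos hq0 hq1 hq1) (Real.rpow_pos_of_pos (sub_pos.2 hq1) _))
    (qPochInf_pos hq0 hq1 (Real.rpow_lt_one hq0.le hq1 hx))

theorem qGamma_add_one (hq0 : 0 < q) (hq1 : q < 1) (hx : 0 < x) :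
    qGamma q (x + 1) = qNum q x * qGamma q x := by
  have hone : 1 - q ≠ 0 := (sub_pos.2 hq1).ne'
  have hqx : 1 - q ^ x ≠ 0 := (sub_pos.2 (Real.rpow_lt_one hq0.le hq1 hx)).ne'
  have hpow : (1 - q) ^ (1 - x) = (1 - q) ^ (1 - (x + 1)) * (1 - q) := by
    rw [← Real.rpow_add_one hone]
    congr 1
    ring
  rw [qGamma, qGamma, qNum, qPochInf_eq_mul (q ^ x) hq0.le hq1, ← Real.rpow_add_one hq0.ne', hpow]
  field_simp

theorem qGamma_add_two (hq0 : 0 < q) (hq1 : q < 1) (hx : 0 < x) :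
    qGamma q (x + 2) = qNum q x * qNum q (x + 1) * qGamma q x := by
  rw [← one_add_one_eq_two, ← add_assoc, qGamma_add_one hq0 hq1 (by positivity),
    qGamma_add_one hq0 hq1 hx]
  ring

theorem qGamma_add_four (hq0 : 0 < q) (hq1 : q < 1) (hx : 0 < x) :
    qGamma q (x + 4) = qNum q (x + 2) * qNum q (x + 3) * qGamma q (x + 2) := by
  convert qGamma_add_two hq0 hq1 (show 0 < x + 2 by positivity) using 2 <;> ring_nf

theorem qGamma_add_two_sq_le (hq0 : 0 < q) (hq1 : q < 1) (hx : 0 < x) :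
    qGamma q (x + 2) ^ 2 ≤ qGamma q x * qGamma q (x + 4) := by
  have hG := (qGamma_pos hq0 hq1 hx).le
  have hG2 := (qGamma_pos hq0 hq1 (show 0 < x + 2 by positivity)).le
  have h1 := (qNum_pos hq0 hq1 (show 0 < x + 1 by positivity)).le
  have h2 := (qNum_pos hq0 hq1 (show 0 < x + 2 by positivity)).le
  calc qGamma q (x + 2) ^ 2
      = qNum q x * qNum q (x + 1) * qGamma q x * qGamma q (x + 2) := by
        rw [sq]; nth_rw 1 [qGamma_add_two hq0 hq1 hx]
    _ ≤ qNum q (x + 2) * qNum q (x + 3) * qGamma q x * qGamma q (x + 2) := by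
        gcongr <;> exact qNum_le_qNum hq0 hq1 (by linarith)
    _ = qGamma q x * qGamma q (x + 4) := by rw [qGamma_add_four hq0 hq1 hx]; ring

theorem qGamma_cube_mul_le (hq0 : 0 < q) (hq1 : q < 1) (hx : 0 < x) :
    qGamma q (x + 2) ^ 3 * qGamma q (x + 6) ≤ qGamma q x * qGamma q (x + 4) ^ 3 := by
  have h₀ := (qNum_pos hq0 hq1 hx).le
  have h₁ := (qNum_pos hq0 hq1 (show 0 < x + 1 by positivity)).le
  have h₂ := (qNum_pos hq0 hq1 (show 0 < x + 2 by positivity)).le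
  have h₃ := (qNum_pos hq0 hq1 (show 0 < x + 3 by positivity)).le
  have h₅ := (qNum_pos hq0 hq1 (show 0 < x + 5 by positivity)).le
  have hx4 : qNum q x * qNum q (x + 4) ≤ qNum q (x + 2) * qNum q (x + 2) :=
    qNum_mul_qNum_le_of_add_eq hq0 hq1 (by linarith) (by linarith) (by ring)
  have hx5 : qNum q (x + 1) * qNum q (x + 5) ≤ qNum q (x + 3) * qNum q (x + 3) :=
    qNum_mul_qNum_le_of_add_eq hq0 hq1 (by linarith) (by linarith) (by ring)
  have hG6 : qGamma q (x + 6) = qNum q (x + 4) * qNum q (x + 5) * qGamma q (x + 4) := by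
    convert qGamma_add_four hq0 hq1 (show 0 < x + 2 by positivity) using 2 <;> ring_nf
  rw [hG6, qGamma_add_four hq0 hq1 hx, qGamma_add_two hq0 hq1 hx]
  generalize qGamma q x = G at *
  set a := qNum q x * qNum q (x + 1)
  set b := qNum q (x + 2) * qNum q (x + 3)
  calc (a * G) ^ 3 * (qNum q (x + 4) * qNum q (x + 5) * (b * (a * G)))
      = a ^ 3 * b * G ^ 4 * (qNum q x * qNum q (x + 4) * (qNum q (x + 1) * qNum q (x + 5))) := by
        ring
    _ ≤ a ^ 3 * b * G ^ 4 *
          (qNum q (x + 2) * qNum q (x + 2) * (qNum q (x + 3) * qNum q (x + 3))) := by gcongr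
    _ = G * (b * (a * G)) ^ 3 := by ring

theorem five_mul_sq_mul_qNum_mul_lt (hq0 : 0 < q) (hq1 : q < 1) :
    5 * q ^ 2 * (qNum q 3 * qNum q 4) < 2 * (qNum q 5 * qNum q 6) := by
  have h (n : ℕ) := qNum_natCast hq1.ne n
  have h3 := h 3
  have h4 := h 4
  have h5 := h 5
  have h6 := h 6
  norm_num [Finset.sum_range_succ] at h3 h4 h5 h6
  have hdiff : 0 < (1 + q) * (1 + q + q ^ 2) * (1 - q) ^ 2 *
      (2 + 4 * q + 3 * q ^ 2 + 4 * q ^ 3 + 2 * q ^ 4) := by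
    positivity
  rw [h3, h4, h5, h6]
  linear_combination hdiff

theorem five_mul_sq_mul_qGamma_sq_lt (hq0 : 0 < q) (hq1 : q < 1) (hx : 0 < x) (hx3 : x ≤ 3) :
    5 * q ^ 2 * qGamma q (x + 2) ^ 2 < 2 * (qGamma q x * qGamma q (x + 4)) := by
  have hpos {y : ℝ} (hy : 0 < y) : 0 < qNum q y := qNum_pos hq0 hq1 hy
  have hG := qGamma_pos hq0 hq1 hx
  have hG2 := qGamma_pos hq0 hq1 (show 0 < x + 2 by positivity)
  have h56 : 0 < qNum q 5 * qNum q 6 := mul_pos (hpos (by norm_num)) (hpos (by norm_num))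
  have h23 : 0 < qNum q (x + 2) * qNum q (x + 3) :=
    mul_pos (hpos (by positivity)) (hpos (by positivity))
  have hx5 : qNum q x * qNum q 5 ≤ qNum q 3 * qNum q (x + 2) :=
    qNum_mul_qNum_le_of_add_eq hq0 hq1 (by linarith) (by linarith) (by ring)
  have hx6 : qNum q (x + 1) * qNum q 6 ≤ qNum q 4 * qNum q (x + 3) :=
    qNum_mul_qNum_le_of_add_eq hq0 hq1 (by linarith) (by linarith) (by ring)
  have hnum : 5 * q ^ 2 * (qNum q x * qNum q (x + 1)) < 2 * (qNum q (x + 2) * qNum q (x + 3)) := by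
    refine lt_of_mul_lt_mul_right ?_ h56.le
    calc 5 * q ^ 2 * (qNum q x * qNum q (x + 1)) * (qNum q 5 * qNum q 6)
        = 5 * q ^ 2 * ((qNum q x * qNum q 5) * (qNum q (x + 1) * qNum q 6)) := by ring
      _ ≤ 5 * q ^ 2 * ((qNum q 3 * qNum q (x + 2)) * (qNum q 4 * qNum q (x + 3))) := by
          have := (hpos (show 0 < x + 1 by positivity)).le
          have := (hpos (show 0 < x + 2 by positivity)).le
          have := (hpos (show (0 : ℝ) < 3 by norm_num)).le
          have := (hpos (show (0 : ℝ) < 6 by norm_num)).le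
          gcongr
      _ = 5 * q ^ 2 * (qNum q 3 * qNum q 4) * (qNum q (x + 2) * qNum q (x + 3)) := by ring
      _ < 2 * (qNum q 5 * qNum q 6) * (qNum q (x + 2) * qNum q (x + 3)) :=
          mul_lt_mul_of_pos_right (five_mul_sq_mul_qNum_mul_lt hq0 hq1) h23
      _ = 2 * (qNum q (x + 2) * qNum q (x + 3)) * (qNum q 5 * qNum q 6) := by ring
  calc 5 * q ^ 2 * qGamma q (x + 2) ^ 2
      = 5 * q ^ 2 * (qNum q x * qNum q (x + 1)) * (qGamma q x * qGamma q (x + 2)) := by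
        rw [sq (qGamma q (x + 2))]; nth_rw 1 [qGamma_add_two hq0 hq1 hx]; ring
    _ < 2 * (qNum q (x + 2) * qNum q (x + 3)) * (qGamma q x * qGamma q (x + 2)) := by gcongr
    _ = 2 * (qGamma q x * qGamma q (x + 4)) := by rw [qGamma_add_four hq0 hq1 hx]; ring

end QGamma

section HML

variable {q γ : ℝ}

/-- The coefficients `cₙ` for which `hML γ σ q z = z * ∑ (-1)ⁿ cₙ (A z)ⁿ`, where the factor
`A = σ² Γ_q(γ+1) / Γ_q(γ+3)` is chosen so that `c₁ = 1`. -/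
noncomputable def hMLCoeff (q γ : ℝ) (n : ℕ) : ℝ :=
  q ^ (n * (n - 1)) * qGamma q (γ + 1) / qGamma q (2 * n + γ + 1) *
    (qGamma q (γ + 3) / qGamma q (γ + 1)) ^ n

theorem hMLCoeff_two (hγ : qGamma q (γ + 1) ≠ 0) :
    hMLCoeff q γ 2 =
      q ^ 2 * qGamma q (γ + 3) ^ 2 / (qGamma q (γ + 1) * qGamma q (γ + 5)) := by
  have h5 : 2 * ((2 : ℕ) : ℝ) + γ + 1 = γ + 5 := by push_cast; ring
  rw [hMLCoeff, h5]
  simp only [Nat.reduceSub, Nat.reduceMul]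
  field_simp

theorem hMLCoeff_three (hγ : qGamma q (γ + 1) ≠ 0) :
    hMLCoeff q γ 3 =
      q ^ 6 * qGamma q (γ + 3) ^ 3 / (qGamma q (γ + 1) ^ 2 * qGamma q (γ + 7)) := by
  have h7 : 2 * ((3 : ℕ) : ℝ) + γ + 1 = γ + 7 := by push_cast; ring
  rw [hMLCoeff, h7]
  simp only [Nat.reduceSub, Nat.reduceMul]
  field_simp

theorem hMLCoeff_mul_le_sq (hq0 : 0 < q) (hq1 : q < 1) (hγ : -1 < γ) (n : ℕ) :
    hMLCoeff q γ (n + 2) * hMLCoeff q γ n ≤ hMLCoeff q γ (n + 1) ^ 2 := by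
  have hx : 0 < 2 * (n : ℝ) + γ + 1 := by linarith [n.cast_nonneg (α := ℝ)]
  have hlog := qGamma_add_two_sq_le hq0 hq1 hx
  have hG := qGamma_pos hq0 hq1 hx
  have hG2 := qGamma_pos hq0 hq1 (show 0 < 2 * (n : ℝ) + γ + 1 + 2 by positivity)
  have hG4 := qGamma_pos hq0 hq1 (show 0 < 2 * (n : ℝ) + γ + 1 + 4 by positivity)
  have h1 : 2 * ((n + 1 : ℕ) : ℝ) + γ + 1 = 2 * n + γ + 1 + 2 := by push_cast; ring
  have h2 : 2 * ((n + 2 : ℕ) : ℝ) + γ + 1 = 2 * n + γ + 1 + 4 := by push_cast; ring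
  have hexp : (n + 2) * (n + 1) + n * (n - 1) = (n + 1) * n * 2 + 2 := by
    rcases n with _ | n
    · rfl
    · rw [Nat.add_sub_cancel]; ring
  rw [hMLCoeff, hMLCoeff, hMLCoeff, h1, h2, Nat.add_sub_cancel, Nat.add_succ_sub_one]
  generalize qGamma q (2 * (n : ℝ) + γ + 1) = G at *
  generalize qGamma q (2 * (n : ℝ) + γ + 1 + 2) = G2 at *
  generalize qGamma q (2 * (n : ℝ) + γ + 1 + 4) = G4 at *
  generalize qGamma q (γ + 3) / qGamma q (γ + 1) = k at *
  generalize qGamma q (γ + 1) = g at *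
  calc _ = q ^ ((n + 2) * (n + 1) + n * (n - 1)) * (g ^ 2 * (k ^ (n + 1)) ^ 2) / (G * G4) := by
        field_simp; ring
    _ ≤ q ^ ((n + 1) * n * 2) * (g ^ 2 * (k ^ (n + 1)) ^ 2) / G2 ^ 2 := by
        gcongr ?_ * _ / ?_
        exact pow_le_pow_of_le_one hq0.le hq1.le (hexp ▸ Nat.le_add_right _ 2)
    _ = _ := by rw [pow_mul]; field_simp

theorem isNormalizedLogConcave_hMLCoeff (hq0 : 0 < q) (hq1 : q < 1) (hγ : -1 < γ) :
    IsNormalizedLogConcave (hMLCoeff q γ) where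
  pos n := by
    have hn := qGamma_pos hq0 hq1 (show 0 < 2 * (n : ℝ) + γ + 1 by
      linarith [n.cast_nonneg (α := ℝ)])
    have h1 := qGamma_pos hq0 hq1 (show 0 < γ + 1 by linarith)
    have h3 := qGamma_pos hq0 hq1 (show 0 < γ + 3 by linarith)
    rw [hMLCoeff]
    positivity
  zero := by simp [hMLCoeff, (qGamma_pos hq0 hq1 (show 0 < γ + 1 by linarith)).ne']
  one := by
    have h1 := (qGamma_pos hq0 hq1 (show 0 < γ + 1 by linarith)).ne'
    have h3 := (qGamma_pos hq0 hq1 (show 0 < γ + 3 by linarith)).ne'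
    have heq : 2 * ((1 : ℕ) : ℝ) + γ + 1 = γ + 3 := by push_cast; ring
    rw [hMLCoeff, heq, Nat.sub_self, mul_zero, pow_zero, pow_one]
    field_simp
  mul_le_sq := hMLCoeff_mul_le_sq hq0 hq1 hγ

theorem hMLCoeff_two_lt (hq0 : 0 < q) (hq1 : q < 1) (hγ0 : -1 < γ) (hγ2 : γ ≤ 2) :
    hMLCoeff q γ 2 < 2 / 5 := by
  have h1 := qGamma_pos hq0 hq1 (show 0 < γ + 1 by linarith)
  have h5 := qGamma_pos hq0 hq1 (show 0 < γ + 5 by linarith)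
  have h := five_mul_sq_mul_qGamma_sq_lt hq0 hq1 (show 0 < γ + 1 by linarith) (by linarith)
  norm_num [add_assoc] at h
  rw [hMLCoeff_two h1.ne', div_lt_div_iff₀ (by positivity) (by norm_num)]
  linarith

theorem hMLCoeff_two_pow_three_le (hq0 : 0 < q) (hq1 : q < 1) (hγ : -1 < γ) :
    hMLCoeff q γ 2 ^ 3 ≤ hMLCoeff q γ 3 := by
  have h1 := qGamma_pos hq0 hq1 (show 0 < γ + 1 by linarith)
  have h3 := qGamma_pos hq0 hq1 (show 0 < γ + 3 by linarith)
  have h5 := qGamma_pos hq0 hq1 (show 0 < γ + 5 by linarith)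
  have h7 := qGamma_pos hq0 hq1 (show 0 < γ + 7 by linarith)
  have h := qGamma_cube_mul_le hq0 hq1 (show 0 < γ + 1 by linarith)
  norm_num [add_assoc] at h
  rw [hMLCoeff_two h1.ne', hMLCoeff_three h1.ne', div_pow,
    div_le_div_iff₀ (by positivity) (by positivity)]
  calc _ = q ^ 6 * qGamma q (γ + 3) ^ 3 * qGamma q (γ + 1) ^ 2 *
        (qGamma q (γ + 3) ^ 3 * qGamma q (γ + 7)) := by ring
    _ ≤ q ^ 6 * qGamma q (γ + 3) ^ 3 * qGamma q (γ + 1) ^ 2 *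
        (qGamma q (γ + 1) * qGamma q (γ + 5) ^ 3) := by gcongr
    _ = _ := by ring

theorem hML_eq_mul_altSum (σ : ℝ) (h1 : qGamma q (γ + 1) ≠ 0) (h3 : qGamma q (γ + 3) ≠ 0)
    (z : ℂ) :
    hML γ σ q z = z * altSum (hMLCoeff q γ)
      ((σ ^ 2 * qGamma q (γ + 1) / qGamma q (γ + 3) : ℝ) * z) := by
  have hterm (n : ℕ) : qGamma q (γ + 1) *
      ((-1) ^ n * σ ^ (2 * n) * q ^ (n * (n - 1)) / qGamma q (2 * n + γ + 1)) =
      (-1) ^ n * hMLCoeff q γ n * (σ ^ 2 * qGamma q (γ + 1) / qGamma q (γ + 3)) ^ n := by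
    rw [hMLCoeff, div_pow, div_pow, mul_pow, ← pow_mul]
    field_simp
  rw [hML, altSum, mul_assoc, ← tsum_mul_left]
  congr 2
  funext n
  rw [← mul_assoc, ← Complex.ofReal_mul, hterm]
  push_cast
  ring

theorem radiusStarlike_hML (α : ℝ) {σ : ℝ} (hσ : σ ≠ 0) (h1 : 0 < qGamma q (γ + 1))
    (h3 : 0 < qGamma q (γ + 3)) :
    radiusStarlike α (hML γ σ q) = radiusStarlike α (fun w => w * altSum (hMLCoeff q γ) w) /
      (σ ^ 2 * qGamma q (γ + 1) / qGamma q (γ + 3)) := by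
  have hscale : 0 < σ ^ 2 * qGamma q (γ + 1) / qGamma q (γ + 3) := by positivity
  rw [← radiusStarlike_comp_mul hscale]
  congr 1
  funext z
  rw [hML_eq_mul_altSum σ h1.ne' h3.ne',
    mul_assoc, mul_div_cancel_left₀ _ (Complex.ofReal_ne_zero.2 hscale.ne')]

end HML

theorem stmt11_general (q σ γ : ℝ) (hq0 : 0 < q) (hq1 : q < 1) (hσ : σ ≠ 0)
    (hγ0 : -1 < γ) (hγ2 : γ ≤ 2) :
    qGamma q (γ + 3) / (2 * σ ^ 2 * qGamma q (γ + 1)) <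
      radiusStarlike 0 (hML γ σ q) ∧
    radiusStarlike 0 (hML γ σ q) <
      qGamma q (γ + 3) * qGamma q (γ + 5) /
        (σ ^ 2 * (2 * qGamma q (γ + 1) * qGamma q (γ + 5) -
          3 * q ^ 2 * qGamma q (γ + 3) ^ 2)) := by
  have h1 := qGamma_pos hq0 hq1 (show 0 < γ + 1 by linarith)
  have h3 := qGamma_pos hq0 hq1 (show 0 < γ + 3 by linarith)
  have h5 := qGamma_pos hq0 hq1 (show 0 < γ + 5 by linarith)
  have hscale : 0 < σ ^ 2 * qGamma q (γ + 1) / qGamma q (γ + 3) := by positivity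
  have hc2 := hMLCoeff_two_lt hq0 hq1 hγ0 hγ2
  obtain ⟨hlower, hupper⟩ :=
    (isNormalizedLogConcave_hMLCoeff hq0 hq1 hγ0).radiusStarlike_mem_Ioo hc2
      (hMLCoeff_two_pow_three_le hq0 hq1 hγ0)
  rw [radiusStarlike_hML 0 hσ h1 h3]
  constructor
  · refine lt_of_eq_of_lt ?_ (div_lt_div_of_pos_right hlower hscale)
    field_simp
  · refine (div_lt_div_of_pos_right hupper hscale).trans_eq ?_
    rw [hMLCoeff_two h1.ne'] at hc2 ⊢
    field_simp

theorem stmt11 (q σ γ : ℝ) (hq0 : 0 < q) (hq1 : q < 1) (hσ : 0 < σ)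
    (hγ0 : 0 ≤ γ) (hγ2 : γ < 2) (hR : condR q γ) :
    qGamma q (γ + 3) / (2 * σ ^ 2 * qGamma q (γ + 1)) <
      radiusStarlike 0 (hML γ σ q) ∧
    radiusStarlike 0 (hML γ σ q) <
      qGamma q (γ + 3) * qGamma q (γ + 5) /
        (σ ^ 2 * (2 * qGamma q (γ + 1) * qGamma q (γ + 5) -
          3 * q ^ 2 * qGamma q (γ + 3) ^ 2)) := by
  exact stmt11_general q σ γ hq0 hq1 hσ.ne' (by linarith) hγ2.le
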